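/- arXiv:2212.07170 — 3 statements merged into one kernel-verified Lean document; each statement's English description precedes it below -/
import Mathlib

section
/- Let an m-stage implicit Runge-Kutta method with coefficient matrix A, weights b and nodes c satisfy: A is invertible, b_j ≠ 0 for all j = 1,…,m, the nodes c_1,…,c_m are pairwise distinct, and the simplifying conditions C(m) and D(m) hold. Then b^T x ≠ 0 for every eigenvector x ∈ ℂ^m of A. -/
/-! STATEMENT 0: For an m-stage implicit Runge-Kutta method `(A, b, c)` with `A`
invertible, nonzero weights, pairwise distinct nodes, and the simplifying conditions
`C(m)` and `D(m)`, one has `bᵀ x ≠ 0` for every (complex) eigenvector `x` of `A`. -/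

open Finset

/-! Testing `D(m)` against an eigenvector `A x = lam x` gives the recursion
`k * lam * μ_{k-1} = μ_0 - μ_k` for the moments `μ_k = ∑ j, b_j c_j ^ k x_j`. If `μ_0 = bᵀ x`
vanishes, then so do `μ_0, …, μ_{m-1}`, and the Vandermonde system at the distinct nodes gives
`b_j x_j = 0` for all `j`. -/

open scoped Matrix

section

variable {ι R S K : Type*} [Fintype ι]

theorem eq_zero_of_forall_dotProduct_pow_eq_zero [CommRing R] [IsDomain R] {c v : ι → R}
    (hc : Function.Injective c) (hv : ∀ k < Fintype.card ι, v ⬝ᵥ c ^ k = 0) : v = 0 := by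
  let e := (Fintype.equivFin ι).symm
  have reindexed : v ∘ e = 0 :=
    Matrix.eq_zero_of_forall_pow_sum_mul_pow_eq_zero (hc.comp e.injective) fun k ↦
      (e.sum_comp fun j ↦ v j * c j ^ (k : ℕ)).trans (hv k k.isLt)
  exact e.surjective.injective_comp_right reindexed

/-- Butcher's simplifying condition `D(η)` for a Runge-Kutta method with coefficients `A`,
weights `b` and nodes `c`; products and powers of vectors are entrywise. The index `k` is shifted
to start at `0`, and the denominator `k + 1` is cleared so that the condition makes sense over any
commutative ring. -/
def SimplifyingConditionD [CommRing R] (A : Matrix ι ι R) (b c : ι → R) (η : ℕ) : Prop :=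
  ∀ k < η, ((k + 1 : ℕ) : R) • ((b * c ^ k) ᵥ* A) = b * (1 - c ^ (k + 1))

theorem simplifyingConditionD_iff_sum_eq_div [Field K] [CharZero K] {A : Matrix ι ι K}
    {b c : ι → K} {η : ℕ} :
    SimplifyingConditionD A b c η ↔
      ∀ k ∈ Icc 1 η, ∀ j, ∑ i, b i * c i ^ (k - 1) * A i j = b j * (1 - c j ^ k) / (k : K) := by
  have entrywise (k : ℕ) :
      ((k + 1 : ℕ) : K) • ((b * c ^ k) ᵥ* A) = b * (1 - c ^ (k + 1)) ↔
        ∀ j, ∑ i, b i * c i ^ k * A i j = b j * (1 - c j ^ (k + 1)) / ((k + 1 : ℕ) : K) := by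
    rw [funext_iff]
    refine forall_congr' fun j ↦ ?_
    rw [eq_div_iff (Nat.cast_ne_zero.2 k.succ_ne_zero), mul_comm (∑ i, _)]
    rfl
  constructor
  · intro hD k hk
    obtain ⟨hk_pos, hk_le⟩ := mem_Icc.1 hk
    obtain ⟨k, rfl⟩ := Nat.exists_eq_add_of_le' hk_pos
    exact (entrywise k).1 (hD k hk_le)
  · intro h k hk
    exact (entrywise k).2 (h (k + 1) (mem_Icc.2 ⟨k.succ_pos, hk⟩))

namespace SimplifyingConditionD

theorem map [CommRing R] [CommRing S] {A : Matrix ι ι R} {b c : ι → R} {η : ℕ}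
    (hD : SimplifyingConditionD A b c η) (f : R →+* S) :
    SimplifyingConditionD (A.map f) (f ∘ b) (f ∘ c) η := by
  intro k hk
  ext j
  simpa [Matrix.vecMul, dotProduct] using congrArg f (congrFun (hD k hk) j)

variable [CommRing R] {A : Matrix ι ι R} {b c x : ι → R} {lam : R} {η : ℕ}

theorem mul_dotProduct_eigenvector_eq_sub (hD : SimplifyingConditionD A b c η)
    (heig : A *ᵥ x = lam • x) {k : ℕ} (hk : k < η) :
    ((k + 1 : ℕ) : R) * (lam * ((b * c ^ k) ⬝ᵥ x)) = b ⬝ᵥ x - (b * c ^ (k + 1)) ⬝ᵥ x :=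
  calc ((k + 1 : ℕ) : R) * (lam * ((b * c ^ k) ⬝ᵥ x))
      = (((k + 1 : ℕ) : R) • ((b * c ^ k) ᵥ* A)) ⬝ᵥ x := by
        rw [smul_dotProduct, ← Matrix.dotProduct_mulVec, heig, dotProduct_smul, smul_eq_mul,
          smul_eq_mul]
    _ = (b * (1 - c ^ (k + 1))) ⬝ᵥ x := by rw [hD k hk]
    _ = b ⬝ᵥ x - (b * c ^ (k + 1)) ⬝ᵥ x := by rw [mul_sub, mul_one, sub_dotProduct]

theorem dotProduct_eigenvector_eq_zero (hD : SimplifyingConditionD A b c η)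
    (heig : A *ᵥ x = lam • x) (hbx : b ⬝ᵥ x = 0) :
    ∀ k ≤ η, (b * c ^ k) ⬝ᵥ x = 0
  | 0, _ => by rwa [pow_zero, mul_one]
  | k + 1, hk => by
    have previous := hD.dotProduct_eigenvector_eq_zero heig hbx k (Nat.le_of_succ_le hk)
    have recursion := hD.mul_dotProduct_eigenvector_eq_sub heig hk
    rwa [previous, hbx, mul_zero, mul_zero, zero_sub, zero_eq_neg] at recursion

end SimplifyingConditionD

theorem rk_weight_dot_eigenvector_ne_zero_general [CommRing R] [IsDomain R] {A : Matrix ι ι R}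
    {b c x : ι → R} {lam : R} {η : ℕ} (hb : ∀ j, b j ≠ 0) (hc : Function.Injective c)
    (hη : Fintype.card ι ≤ η) (hD : SimplifyingConditionD A b c η) (hx : x ≠ 0)
    (heig : A *ᵥ x = lam • x) : b ⬝ᵥ x ≠ 0 := by
  intro hbx
  have moments (k : ℕ) (hk : k < Fintype.card ι) : (b * x) ⬝ᵥ c ^ k = 0 :=
    calc (b * x) ⬝ᵥ c ^ k = (b * c ^ k) ⬝ᵥ x := sum_congr rfl fun _ _ ↦ mul_right_comm ..
      _ = 0 := hD.dotProduct_eigenvector_eq_zero heig hbx k (hk.le.trans hη)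
  have hbx_entries : b * x = 0 := eq_zero_of_forall_dotProduct_pow_eq_zero hc moments
  exact hx <| funext fun j ↦ (mul_eq_zero.1 (congrFun hbx_entries j)).resolve_left (hb j)

end

theorem rk_weight_dot_eigenvector_ne_zero
    (m : ℕ) (hm : 0 < m)
    (A : Matrix (Fin m) (Fin m) ℝ) (b c : Fin m → ℝ)
    (hA : IsUnit A.det)
    (hb : ∀ j, b j ≠ 0)
    (hc : Function.Injective c)
    (hCcond : ∀ k ∈ Finset.Icc 1 m, ∀ i, ∑ j, A i j * c j ^ (k - 1) = c i ^ k / (k : ℝ))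
    (hDcond : ∀ k ∈ Finset.Icc 1 m, ∀ j,
      ∑ i, b i * c i ^ (k - 1) * A i j = b j * (1 - c j ^ k) / (k : ℝ))
    (lam : ℂ) (x : Fin m → ℂ) (hx : x ≠ 0)
    (heig : (A.map (Complex.ofReal)).mulVec x = lam • x) :
    ∑ j, (b j : ℂ) * x j ≠ 0 := by
  have hD := (simplifyingConditionD_iff_sum_eq_div.2 hDcond).map Complex.ofRealHom
  exact rk_weight_dot_eigenvector_ne_zero_general (fun j ↦ Complex.ofReal_ne_zero.2 (hb j))
    (Complex.ofReal_injective.comp hc) (Fintype.card_fin m).le hD hx heig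
end

section
/- Let A ∈ ℝ^{m×m} be invertible, let λ ∈ ℂ be an eigenvalue of A^{−1}, and let ζ ∈ ℂ with ζ ≠ 1 and ζ·R(∞) ≠ 1, so that the matrix Δ(ζ) = (ζ/(1−ζ)·𝟙 b^T + A)^{−1} exists. Then det(λI − Δ(ζ)) = [ζ/(1 − ζ·R(∞))] · b^T adj(λA − I) A^{−1} 𝟙 · det(A^{−1}), where adj denotes the adjugate matrix. -/
/-! STATEMENT 2: determinant formula for `det(λI − Δ(ζ))` when `λ` is an eigenvalue of
`A⁻¹`, with `Δ(ζ) = (ζ/(1−ζ)·𝟙 bᵀ + A)⁻¹` and `R(∞) = 1 − bᵀ A⁻¹ 𝟙`. -/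

open Matrix Finset

/-! With `M = Δ(ζ)⁻¹`, the product `det(λI − M⁻¹) · det M = det(λM − I)` is the determinant of a
rank-one perturbation of `λA − I`. As `λ` is an eigenvalue of `A⁻¹`, the matrix `λA − I` is
singular, so in the matrix determinant lemma `det(B + u vᵀ) = det B + vᵀ adj(B) u` only the
adjugate term survives. Singularity also gives `adj(λA − I) A⁻¹ = λ adj(λA − I)`, which absorbs the
factor `λ`. Finally `det M = det A · (1 − ζ R(∞)) / (1 − ζ)` by the form of the lemma
for invertible matrices. -/

section CommRing

variable {n R : Type*} [Fintype n] [DecidableEq n] [CommRing R]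

theorem isUnit_det_map {S : Type*} [CommRing S] (f : R →+* S) {A : Matrix n n R}
    (hA : IsUnit A.det) : IsUnit (A.map f).det := by
  rw [← RingHom.mapMatrix_apply, ← RingHom.map_det]
  exact hA.map f

theorem det_mul_det_add_vecMulVec (A : Matrix n n R) (u v : n → R) :
    A.det * (A + vecMulVec u v).det = A.det * (A.det + v ⬝ᵥ A.adjugate *ᵥ u) := by
  -- The Schur complement of the corner of `bordered` is `A + u vᵀ`; `elimination` clears `-u`.
  let bordered : Matrix (Unit ⊕ n) (Unit ⊕ n) R :=
    fromBlocks 1 (replicateRow Unit v) (-replicateCol Unit u) A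
  let elimination : Matrix (Unit ⊕ n) (Unit ⊕ n) R :=
    fromBlocks (A.det • 1) 0 (replicateCol Unit (A.adjugate *ᵥ u)) 1
  have det_bordered : bordered.det = (A + vecMulVec u v).det := by
    rw [det_fromBlocks_one₁₁, Matrix.neg_mul, sub_neg_eq_add, ← vecMulVec_eq]
  have det_elimination : elimination.det = A.det := by
    simp [elimination]
  have bordered_mul_elimination : bordered * elimination =
      fromBlocks (of fun _ _ => A.det + v ⬝ᵥ A.adjugate *ᵥ u) (replicateRow Unit v) 0 A := by
    have eliminated : A * replicateCol Unit (A.adjugate *ᵥ u) = A.det • replicateCol Unit u := by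
      rw [← replicateCol_mulVec, mulVec_mulVec, mul_adjugate, smul_mulVec, one_mulVec,
        replicateCol_smul]
    rw [fromBlocks_multiply, eliminated]
    congr 1 <;> ext <;> simp [replicateRow_mul_replicateCol_apply]
  calc A.det * (A + vecMulVec u v).det
      = (bordered * elimination).det := by
        rw [det_mul, det_bordered, det_elimination, mul_comm]
    _ = A.det * (A.det + v ⬝ᵥ A.adjugate *ᵥ u) := by
        rw [bordered_mul_elimination, det_fromBlocks_zero₂₁, det_unique, of_apply, mul_comm]

theorem det_add_vecMulVec (A : Matrix n n R) (u v : n → R) :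
    (A + vecMulVec u v).det = A.det + v ⬝ᵥ A.adjugate *ᵥ u := by
  -- The determinant of `X • 1 + A` is monic, hence can be cancelled; then set `X = 0`.
  let B : Matrix n n (Polynomial R) := (Polynomial.X : Polynomial R) • 1 + A.map Polynomial.C
  let uC : n → Polynomial R := Polynomial.C ∘ u
  let vC : n → Polynomial R := Polynomial.C ∘ v
  have hB : B.det.Monic := Polynomial.leadingCoeff_det_X_one_add_C A
  have hBuv : (B + vecMulVec uC vC).det = B.det + vC ⬝ᵥ B.adjugate *ᵥ uC :=
    hB.isRegular.left (det_mul_det_add_vecMulVec B uC vC)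
  let ev := Polynomial.evalRingHom (0 : R)
  have ev_B : ev.mapMatrix B = A := by
    ext i j
    simp [ev, B]
  have ev_uC : ev ∘ uC = u := by
    ext i
    simp [ev, uC]
  have ev_vC : ev ∘ vC = v := by
    ext i
    simp [ev, vC]
  have ev_B_add : ev.mapMatrix (B + vecMulVec uC vC) = A + vecMulVec u v := by
    rw [map_add, ev_B]
    ext i j
    simp [ev, uC, vC, vecMulVec_apply]
  have ev_adj : ev (vC ⬝ᵥ B.adjugate *ᵥ uC) = v ⬝ᵥ A.adjugate *ᵥ u := by
    have ev_mulVec : ev ∘ (B.adjugate *ᵥ uC) = A.adjugate *ᵥ u := by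
      rw [← ev_B, ← RingHom.map_adjugate, ← ev_uC]
      exact funext (RingHom.map_mulVec ev _ _)
    rw [RingHom.map_dotProduct, ev_vC, ev_mulVec]
  simpa only [map_add, RingHom.map_det, ev_B_add, ev_B, ev_adj] using congrArg ev hBuv

theorem det_add_vecMulVec_of_isUnit {A : Matrix n n R} (hA : IsUnit A.det) (u v : n → R) :
    (A + vecMulVec u v).det = A.det * (1 + v ⬝ᵥ A⁻¹ *ᵥ u) := by
  rw [vecMulVec_eq Unit, det_add_replicateCol_mul_replicateRow hA, Matrix.mul_assoc,
    ← replicateCol_mulVec]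
  simp

theorem det_smul_one_sub_inv_mul_det {M : Matrix n n R} (hM : IsUnit M.det) (μ : R) :
    (μ • (1 : Matrix n n R) - M⁻¹).det * M.det = (μ • M - 1).det := by
  rw [← det_mul, sub_mul, nonsing_inv_mul _ hM, smul_mul_assoc, one_mul]

theorem det_smul_sub_one_eq_zero_of_inv_mulVec [IsDomain R] {A : Matrix n n R}
    (hA : IsUnit A.det) {μ : R} {x : n → R} (hx : x ≠ 0) (hμ : A⁻¹ *ᵥ x = μ • x) :
    (μ • A - 1).det = 0 := by
  refine exists_mulVec_eq_zero_iff.mp ⟨x, hx, ?_⟩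
  rw [sub_mulVec, smul_mulVec, ← mulVec_smul, ← hμ, mulVec_mulVec, mul_nonsing_inv _ hA, sub_self]

theorem adjugate_smul_sub_one_mul_inv {A : Matrix n n R} (hA : IsUnit A.det) {μ : R}
    (hμ : (μ • A - 1).det = 0) :
    (μ • A - 1).adjugate * A⁻¹ = μ • (μ • A - 1).adjugate := by
  have h : (μ • A - 1).adjugate = μ • ((μ • A - 1).adjugate * A) := by
    have h := adjugate_mul (μ • A - 1)
    rwa [hμ, zero_smul, mul_sub, mul_one, mul_smul_comm, sub_eq_zero, eq_comm] at h
  calc (μ • A - 1).adjugate * A⁻¹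
      = μ • ((μ • A - 1).adjugate * A) * A⁻¹ := by rw [← h]
    _ = μ • (μ • A - 1).adjugate := by rw [smul_mul_assoc, mul_nonsing_inv_cancel_right _ _ hA]

theorem det_smul_one_sub_inv_add_vecMulVec_mul_det {A : Matrix n n R} (hA : IsUnit A.det)
    {u v : n → R} (hM : IsUnit (A + vecMulVec u v).det) {μ : R} (hμ : (μ • A - 1).det = 0) :
    (μ • (1 : Matrix n n R) - (A + vecMulVec u v)⁻¹).det * (A + vecMulVec u v).det =
      v ⬝ᵥ (μ • A - 1).adjugate *ᵥ (A⁻¹ *ᵥ u) := by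
  have rank_one : μ • (A + vecMulVec u v) - 1 = (μ • A - 1) + vecMulVec (μ • u) v := by
    rw [smul_add, smul_vecMulVec, add_sub_right_comm]
  rw [det_smul_one_sub_inv_mul_det hM, rank_one, det_add_vecMulVec, hμ, zero_add, mulVec_mulVec,
    adjugate_smul_sub_one_mul_inv hA hμ, mulVec_smul, smul_mulVec]

end CommRing

section Field

variable {n K : Type*} [Fintype n] [DecidableEq n] [Field K]

theorem det_add_div_one_sub_smul_vecMulVec {A : Matrix n n K} (hA : IsUnit A.det) (u v : n → K)
    {ζ : K} (hζ : ζ ≠ 1) :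
    (A + vecMulVec ((ζ / (1 - ζ)) • u) v).det =
      A.det * ((1 - ζ * (1 - v ⬝ᵥ A⁻¹ *ᵥ u)) / (1 - ζ)) := by
  have : 1 - ζ ≠ 0 := sub_ne_zero.mpr hζ.symm
  rw [det_add_vecMulVec_of_isUnit hA, mulVec_smul, dotProduct_smul, smul_eq_mul]
  field_simp
  ring

theorem det_lambda_id_sub_Delta_general (A : Matrix n n K) (u v : n → K) (hA : IsUnit A.det)
    (Rinf : K) (hRinf : Rinf = 1 - v ⬝ᵥ A⁻¹ *ᵥ u) (ζ : K) (hζ : ζ ≠ 1) (hζR : ζ * Rinf ≠ 1)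
    (μ : K) (hμ : ∃ x : n → K, x ≠ 0 ∧ A⁻¹ *ᵥ x = μ • x) :
    (μ • (1 : Matrix n n K) - ((ζ / (1 - ζ)) • vecMulVec u v + A)⁻¹).det =
      ζ / (1 - ζ * Rinf) * (v ⬝ᵥ (μ • A - 1).adjugate *ᵥ (A⁻¹ *ᵥ u)) * (A⁻¹).det := by
  obtain ⟨x, hx, hAx⟩ := hμ
  have singular : (μ • A - 1).det = 0 := det_smul_sub_one_eq_zero_of_inv_mulVec hA hx hAx
  have one_sub_ζ_ne : 1 - ζ ≠ 0 := sub_ne_zero.mpr hζ.symm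
  have one_sub_ζR_ne : 1 - ζ * Rinf ≠ 0 := sub_ne_zero.mpr hζR.symm
  have det_M : (A + vecMulVec ((ζ / (1 - ζ)) • u) v).det =
      A.det * ((1 - ζ * Rinf) / (1 - ζ)) := by
    rw [hRinf, det_add_div_one_sub_smul_vecMulVec hA u v hζ]
  have isUnit_M : IsUnit (A + vecMulVec ((ζ / (1 - ζ)) • u) v).det := by
    rw [det_M]
    exact hA.mul (div_ne_zero one_sub_ζR_ne one_sub_ζ_ne).isUnit
  have det_A_ne : A.det ≠ 0 := hA.ne_zero
  rw [add_comm, ← smul_vecMulVec]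
  apply mul_right_cancel₀ isUnit_M.ne_zero
  rw [det_smul_one_sub_inv_add_vecMulVec_mul_det hA isUnit_M singular, det_M, det_nonsing_inv,
    Ring.inverse_eq_inv', mulVec_smul, mulVec_smul, dotProduct_smul, smul_eq_mul]
  field_simp

end Field

theorem det_lambda_id_sub_Delta
    (m : ℕ) (A : Matrix (Fin m) (Fin m) ℝ) (b : Fin m → ℝ)
    (hA : IsUnit A.det)
    (AC : Matrix (Fin m) (Fin m) ℂ) (hAC : AC = A.map Complex.ofReal)
    (bC : Fin m → ℂ) (hbC : bC = fun j => (b j : ℂ))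
    (Rinf : ℂ) (hRinf : Rinf = 1 - bC ⬝ᵥ (AC⁻¹.mulVec (fun _ => 1)))
    (ζ : ℂ) (hζ1 : ζ ≠ 1) (hζR : ζ * Rinf ≠ 1)
    (lam : ℂ)
    (hlam : ∃ x : Fin m → ℂ, x ≠ 0 ∧ (AC⁻¹).mulVec x = lam • x) :
    (lam • (1 : Matrix (Fin m) (Fin m) ℂ)
        - ((ζ / (1 - ζ)) • Matrix.vecMulVec (fun _ => (1 : ℂ)) bC + AC)⁻¹).det
      = (ζ / (1 - ζ * Rinf))
          * (bC ⬝ᵥ ((lam • AC - 1).adjugate.mulVec (AC⁻¹.mulVec (fun _ => 1))))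
          * (AC⁻¹).det := by
  have isUnit_det_AC : IsUnit AC.det := hAC ▸ isUnit_det_map Complex.ofRealHom hA
  exact det_lambda_id_sub_Delta_general AC _ bC isUnit_det_AC Rinf hRinf ζ hζ1 hζR lam hlam
end

section
/- For every integer m ≥ 1 and every θ ∈ [−π,π], every complex zero of the polynomial z ↦ M_m(θ,z) = P_m(z) − e^{iθ} P_m(−z) is purely imaginary. -/
/-! STATEMENT 5: every zero of `M_m(θ,z) = P_m(z) − e^{iθ} P_m(−z)` is purely imaginary,
where `P_m(z) = Σ_{j=0}^m p_j z^j`, `p_j = (2m−j)!/(j!(m−j)!)` is the numerator of the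
`(m,m)`-Padé approximant of `e^z`. -/

open Finset

/-- The numerator `P_m` of the `(m,m)`-Padé approximant of the exponential. -/
noncomputable def Pgauss (m : ℕ) (z : ℂ) : ℂ :=
  ∑ j ∈ Finset.range (m + 1),
    (((2 * m - j).factorial : ℂ) / ((j.factorial : ℂ) * ((m - j).factorial : ℂ))) * z ^ j

/-- `M_m(θ,z) = P_m(z) − e^{iθ} P_m(−z)`. -/
noncomputable def Mgauss (m : ℕ) (θ : ℝ) (z : ℂ) : ℂ :=
  Pgauss m z - Complex.exp (θ * Complex.I) * Pgauss m (-z)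

/-!
For `Re z > 0`, reflecting `z` to `-conj z` moves it closer to every point of the open left
half-plane. Hence a nonconstant real polynomial `p` whose roots all lie there satisfies
`‖p (-z)‖ < ‖p z‖`. On a zero of `Mgauss m θ` the two norms `‖P_m z‖` and `‖P_m (-z)‖` agree because
`exp (iθ)` is unimodular, so neither `z` nor `-z` has positive real part.

That the zeros of `P_m` have negative real part follows from the three-term recurrence
`P_{m+2} = 2 (2m + 3) P_{m+1} + z² P_m`: the quotients `q_m = P_{m+1} / (z P_m)` satisfy
`q_{m+1} = 2 (2m + 3) / z + 1 / q_m`, and so keep a positive real part when `Re z ≥ 0`, `z ≠ 0`.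
-/

open Polynomial
open scoped ComplexConjugate Nat

lemma norm_eval_lt_norm_eval_of_roots {K : Type*} [NormedField K] {p : K[X]} (hp : p.Splits)
    (hdeg : p.natDegree ≠ 0) {w z : K} (h : ∀ r ∈ p.roots, ‖w - r‖ < ‖z - r‖) :
    ‖p.eval w‖ < ‖p.eval z‖ := by
  have hp0 : p ≠ 0 := ne_zero_of_natDegree_gt (Nat.pos_of_ne_zero hdeg)
  have norm_eval (x : K) :
      ‖p.eval x‖ = ‖p.leadingCoeff‖ * (p.roots.map fun r ↦ ‖x - r‖).prod := by
    rw [hp.eval_eq_prod_roots, norm_mul, ← normHom_apply (Multiset.prod _), map_multiset_prod,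
      Multiset.map_map]
    rfl
  by_cases hw : p.IsRoot w
  · have hz : ¬ p.IsRoot z := fun hz ↦
      (norm_nonneg _).not_gt (by simpa using h z ((mem_roots hp0).2 hz))
    rw [hw.eq_zero, norm_zero]
    exact norm_pos_iff.2 hz
  · have norm_sub_pos : ∀ r ∈ p.roots, 0 < ‖w - r‖ := fun r hr ↦
      norm_pos_iff.2 <| sub_ne_zero.2 fun hwr ↦ hw (hwr ▸ isRoot_of_mem_roots hr)
    rw [norm_eval, norm_eval]
    exact mul_lt_mul_of_pos_left
      (Multiset.prod_map_lt_prod_map (hp.roots_ne_zero hdeg) _ _ norm_sub_pos h)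
      (norm_pos_iff.2 (leadingCoeff_ne_zero.2 hp0))

lemma norm_neg_conj_sub_lt_norm_sub {z r : ℂ} (hz : 0 < z.re) (hr : r.re < 0) :
    ‖-conj z - r‖ < ‖z - r‖ := by
  have hsq : ‖z - r‖ ^ 2 - ‖-conj z - r‖ ^ 2 = 4 * (z.re * -r.re) := by
    simp only [← Complex.normSq_eq_norm_sq, Complex.normSq_apply, Complex.sub_re, Complex.sub_im,
      Complex.neg_re, Complex.neg_im, Complex.conj_re, Complex.conj_im]
    ring
  have := mul_pos hz (neg_pos.2 hr)
  exact lt_of_pow_lt_pow_left₀ 2 (norm_nonneg _) (by linarith)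

lemma norm_aeval_neg_lt_norm_aeval {p : ℝ[X]} (hdeg : p.natDegree ≠ 0)
    (hroots : ∀ r : ℂ, aeval r p = 0 → r.re < 0) {z : ℂ} (hz : 0 < z.re) :
    ‖aeval (-z) p‖ < ‖aeval z p‖ := by
  have hreflect : ‖aeval (-z) p‖ = ‖aeval (-conj z) p‖ := by
    rw [← map_neg, aeval_conj, RCLike.norm_conj]
  rw [hreflect, ← eval_map_algebraMap, ← eval_map_algebraMap]
  refine norm_eval_lt_norm_eval_of_roots (IsAlgClosed.splits _) (by rwa [natDegree_map]) fun r hr ↦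
    norm_neg_conj_sub_lt_norm_sub hz (hroots r ?_)
  rw [← eval_map_algebraMap]
  exact isRoot_of_mem_roots hr

/-- The Padé numerator `P_m` as a polynomial with real coefficients, so that Mathlib's theory of
roots and of complex conjugation applies to `Pgauss m`, its evaluation at complex numbers. -/
noncomputable def gaussPolynomial (m : ℕ) : ℝ[X] :=
  ∑ j ∈ range (m + 1), monomial j ((2 * m - j)! / (j ! * (m - j)!) : ℝ)

lemma aeval_gaussPolynomial (m : ℕ) (z : ℂ) : aeval z (gaussPolynomial m) = Pgauss m z := by
  simp [gaussPolynomial, Pgauss, aeval_monomial]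

/-- Writing the coefficient with `m.choose j` makes the formula valid for `j > m` as well, despite
the truncated subtraction. -/
lemma coeff_gaussPolynomial (m j : ℕ) :
    (gaussPolynomial m).coeff j = m.choose j * ((2 * m - j)! / m !) := by
  simp only [gaussPolynomial, finsetSum_coeff, coeff_monomial, sum_ite_eq', mem_range]
  split_ifs with hj
  · rw [Nat.cast_choose ℝ (Nat.lt_succ_iff.1 hj)]
    field_simp
  · simp [Nat.choose_eq_zero_of_lt (by lia : m < j)]

lemma natDegree_gaussPolynomial (m : ℕ) : (gaussPolynomial m).natDegree = m := by
  refine natDegree_eq_of_le_of_coeff_ne_zero (natDegree_le_iff_coeff_eq_zero.2 fun j hj ↦ ?_) ?_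
  · simp [coeff_gaussPolynomial, Nat.choose_eq_zero_of_lt hj]
  · simp [coeff_gaussPolynomial, Nat.factorial_ne_zero]

lemma coeff_gaussPolynomial_add_two (m k : ℕ) :
    (gaussPolynomial (m + 2)).coeff (k + 2) =
      2 * (2 * m + 3) * (gaussPolynomial (m + 1)).coeff (k + 2) +
        (gaussPolynomial m).coeff k := by
  simp only [coeff_gaussPolynomial]
  rcases lt_or_ge m k with hmk | hkm
  · simp [Nat.choose_eq_zero_of_lt, hmk, show m + 1 < k + 2 by lia]
  obtain ⟨d, rfl⟩ := Nat.exists_eq_add_of_le hkm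
  have choose_add_two : ((k + d + 2).choose (k + 2) : ℝ) =
      (k + d + 2) * (k + d + 1) / ((k + 2) * (k + 1)) * (k + d).choose k := by
    have h₁ := Nat.add_one_mul_choose_eq (k + d + 1) (k + 1)
    have h₂ := Nat.add_one_mul_choose_eq (k + d) k
    rify at h₁ h₂
    field_simp
    linear_combination -(k + 1 : ℝ) * h₁ - (k + d + 2 : ℝ) * h₂
  have choose_add_one : ((k + d + 1).choose (k + 2) : ℝ) =
      (k + d + 1) * d / ((k + 2) * (k + 1)) * (k + d).choose k := by
    have h₁ := Nat.add_one_mul_choose_eq (k + d) (k + 1)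
    have h₂ := Nat.choose_succ_right_eq (k + d) k
    rw [Nat.add_sub_cancel_left] at h₂
    rify at h₁ h₂
    field_simp
    linear_combination -(k + 1 : ℝ) * h₁ + (k + d + 1 : ℝ) * h₂
  rw [choose_add_two, choose_add_one, show 2 * (k + d + 2) - (k + 2) = k + 2 * d + 2 by lia,
    show 2 * (k + d + 1) - (k + 2) = k + 2 * d by lia, show 2 * (k + d) - k = k + 2 * d by lia]
  simp only [Nat.factorial_succ]
  push_cast
  field_simp
  ring

lemma gaussPolynomial_add_two (m : ℕ) :
    gaussPolynomial (m + 2) =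
      C (2 * (2 * m + 3) : ℝ) * gaussPolynomial (m + 1) + X ^ 2 * gaussPolynomial m := by
  ext (_ | _ | k) <;> rw [coeff_add, coeff_C_mul]
  · rw [coeff_X_pow_mul', if_neg (by lia), coeff_gaussPolynomial, coeff_gaussPolynomial,
      show 2 * (m + 2) - 0 = 2 * m + 4 by lia, show 2 * (m + 1) - 0 = 2 * m + 2 by lia]
    simp only [Nat.choose_zero_right, Nat.factorial_succ]
    push_cast
    field_simp
    ring
  · rw [coeff_X_pow_mul', if_neg (by lia), coeff_gaussPolynomial, coeff_gaussPolynomial,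
      show 2 * (m + 2) - (0 + 1) = 2 * m + 3 by lia,
      show 2 * (m + 1) - (0 + 1) = 2 * m + 1 by lia]
    simp only [Nat.choose_one_right, zero_add, Nat.factorial_succ]
    push_cast
    field_simp
    ring
  · rw [coeff_X_pow_mul, coeff_gaussPolynomial_add_two]

lemma Pgauss_add_two (m : ℕ) (z : ℂ) :
    Pgauss (m + 2) z = (2 * (2 * m + 3) : ℝ) * Pgauss (m + 1) z + z ^ 2 * Pgauss m z := by
  simp [← aeval_gaussPolynomial, gaussPolynomial_add_two]

/-- Up to the factor `‖z * a n‖ ^ 2`, the quantity below is the real part of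
`q n = a (n + 1) / (z * a n)`, and the recurrence reads `q (n + 1) = c n / z + 1 / q n`. -/
lemma re_mul_conj_pos_of_recurrence {a : ℕ → ℂ} {c : ℕ → ℝ} {z : ℂ}
    (ha : ∀ n, a (n + 2) = c n * a (n + 1) + z ^ 2 * a n) (hc : ∀ n, 0 ≤ c n) (hz : 0 ≤ z.re)
    (h₀ : 0 < (a 1 * conj (z * a 0)).re) (n : ℕ) : 0 < (a (n + 1) * conj (z * a n)).re := by
  have hz0 : z ≠ 0 := by
    rintro rfl
    simp at h₀
  induction n with
  | zero => exact h₀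
  | succ n ih =>
    have hstep : (a (n + 2) * conj (z * a (n + 1))).re =
        c n * (Complex.normSq (a (n + 1)) * z.re) +
          Complex.normSq z * (a (n + 1) * conj (z * a n)).re := by
      rw [ha]
      simp only [pow_two, map_mul, Complex.mul_re, Complex.mul_im, Complex.add_re, Complex.add_im,
        Complex.ofReal_re, Complex.ofReal_im, Complex.conj_re, Complex.conj_im,
        Complex.normSq_apply]
      ring
    rw [hstep]
    exact add_pos_of_nonneg_of_pos
      (mul_nonneg (hc n) (mul_nonneg (Complex.normSq_nonneg _) hz))
      (mul_pos (Complex.normSq_pos.2 hz0) ih)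

lemma Pgauss_zero (z : ℂ) : Pgauss 0 z = 1 := by
  simp [Pgauss]

lemma Pgauss_one (z : ℂ) : Pgauss 1 z = 2 + z := by
  simp [Pgauss, sum_range_succ]

lemma re_Pgauss_mul_conj_pos {z : ℂ} (hz : 0 ≤ z.re) (hz0 : z ≠ 0) (m : ℕ) :
    0 < (Pgauss (m + 1) z * conj (z * Pgauss m z)).re := by
  refine re_mul_conj_pos_of_recurrence (a := (Pgauss · z))
    (fun n ↦ Pgauss_add_two n z) (fun n ↦ by positivity) hz ?_ m
  have h₀ : (Pgauss 1 z * conj (z * Pgauss 0 z)).re = 2 * z.re + Complex.normSq z := by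
    rw [Pgauss_one, Pgauss_zero, mul_one, add_mul, Complex.mul_conj]
    simp
  have := Complex.normSq_pos.2 hz0
  rw [h₀]
  positivity

lemma Pgauss_zero_right_ne_zero (m : ℕ) : Pgauss m 0 ≠ 0 := by
  simp [← aeval_gaussPolynomial, ← coeff_zero_eq_aeval_zero',
    coeff_gaussPolynomial, Nat.factorial_ne_zero]

lemma re_neg_of_Pgauss_eq_zero {m : ℕ} {z : ℂ} (h : Pgauss m z = 0) : z.re < 0 := by
  by_contra! hz
  have hz0 : z ≠ 0 := by
    rintro rfl
    exact Pgauss_zero_right_ne_zero m h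
  simpa [h] using re_Pgauss_mul_conj_pos hz hz0 m

lemma norm_Pgauss_neg_lt_norm_Pgauss {m : ℕ} (hm : m ≠ 0) {z : ℂ} (hz : 0 < z.re) :
    ‖Pgauss m (-z)‖ < ‖Pgauss m z‖ := by
  simp only [← aeval_gaussPolynomial]
  refine norm_aeval_neg_lt_norm_aeval (by rwa [natDegree_gaussPolynomial]) (fun r hr ↦ ?_) hz
  exact re_neg_of_Pgauss_eq_zero ((aeval_gaussPolynomial m r).symm.trans hr)

lemma re_eq_zero_of_norm_Pgauss_eq {m : ℕ} (hm : m ≠ 0) {z : ℂ}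
    (h : ‖Pgauss m z‖ = ‖Pgauss m (-z)‖) : z.re = 0 := by
  rcases lt_trichotomy z.re 0 with hneg | hzero | hpos
  · have := norm_Pgauss_neg_lt_norm_Pgauss hm (z := -z) (by simpa using hneg)
    rw [neg_neg] at this
    exact absurd h this.ne
  · exact hzero
  · exact absurd h.symm (norm_Pgauss_neg_lt_norm_Pgauss hm hpos).ne

theorem Mgauss_zeros_purely_imaginary
    (m : ℕ) (hm : 1 ≤ m)
    (θ : ℝ) (hθ : θ ∈ Set.Icc (-Real.pi) Real.pi)
    (z : ℂ) (hz : Mgauss m θ z = 0) :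
    z.re = 0 := by
  refine re_eq_zero_of_norm_Pgauss_eq (Nat.one_le_iff_ne_zero.1 hm) ?_
  rw [sub_eq_zero.1 hz, norm_mul, Complex.norm_exp_ofReal_mul_I, one_mul]
end
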